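/- arXiv:math/0702196 — 4 statements merged into one kernel-verified Lean document; each statement's English description precedes it below -/
import Mathlib

section
/- Let u : ℝ × ℝⁿ → ℝⁿ be a C¹ time-dependent vector field satisfying the inviscid Burgers equation ∂ₜu(t,x) + (Dₓu(t,x))(u(t,x)) = 0 for all (t,x), and let γ : [0,T] → ℝⁿ be differentiable with γ'(t) = u(t, γ(t)) for all t ∈ [0,T]. Then γ(t) = γ(0) + t·u(0, γ(0)) for all t ∈ [0,T]; that is, each particle moves with constant velocity along a straight line. -/
/-!
By the chain rule, the acceleration of a particle, i.e. the derivative of `t ↦ u (t, γ t)`, is the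
left-hand side of the Burgers equation evaluated along its trajectory. Hence the velocity of the
particle is constant, and integrating it gives a straight line.
-/

section PartialDerivatives

variable {𝕜 E F G : Type*} [NontriviallyNormedField 𝕜]
  [NormedAddCommGroup E] [NormedSpace 𝕜 E] [NormedAddCommGroup F] [NormedSpace 𝕜 F]
  [NormedAddCommGroup G] [NormedSpace 𝕜 G]

theorem fderiv_eq_coprod_fderiv {f : E × F → G} {x : E} {y : F}
    (hf : DifferentiableAt 𝕜 f (x, y)) :
    fderiv 𝕜 f (x, y) =
      (fderiv 𝕜 (fun x' => f (x', y)) x).coprod (fderiv 𝕜 (fun y' => f (x, y')) y) := by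
  have fderiv_left : fderiv 𝕜 (fun x' => f (x', y)) x =
      (fderiv 𝕜 f (x, y)).comp (.inl 𝕜 E F) :=
    (hf.hasFDerivAt.comp x (hasFDerivAt_prodMk_left x y)).fderiv
  have fderiv_right : fderiv 𝕜 (fun y' => f (x, y')) y =
      (fderiv 𝕜 f (x, y)).comp (.inr 𝕜 E F) :=
    (hf.hasFDerivAt.comp y (hasFDerivAt_prodMk_right x y)).fderiv
  rw [fderiv_left, fderiv_right, ContinuousLinearMap.coprod_comp_inl_inr]

theorem hasDerivWithinAt_comp_graph {u : 𝕜 × E → F} {γ : 𝕜 → E} {v : E} {s : Set 𝕜} {t : 𝕜}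
    (hu : DifferentiableAt 𝕜 u (t, γ t)) (hγ : HasDerivWithinAt γ v s t) :
    HasDerivWithinAt (fun τ => u (τ, γ τ))
      (deriv (fun τ => u (τ, γ t)) t + fderiv 𝕜 (fun x => u (t, x)) (γ t) v) s t := by
  have chain_rule : HasDerivWithinAt (fun τ => u (τ, γ τ)) (fderiv 𝕜 u (t, γ t) (1, v)) s t :=
    hu.hasFDerivAt.comp_hasDerivWithinAt_of_eq t ((hasDerivWithinAt_id t s).prodMk hγ) rfl
  rwa [fderiv_eq_coprod_fderiv hu, ContinuousLinearMap.coprod_apply,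
    fderiv_apply_one_eq_deriv] at chain_rule

end PartialDerivatives

section ConvexTime

variable {𝕜 E : Type*} [RCLike 𝕜] [NormedAddCommGroup E] [NormedSpace 𝕜 E] {s : Set 𝕜} {a t : 𝕜}

theorem eq_of_hasDerivWithinAt_zero {f : 𝕜 → E} (hs : Convex ℝ s)
    (hf : ∀ τ ∈ s, HasDerivWithinAt f 0 s τ) (ha : a ∈ s) (ht : t ∈ s) : f t = f a := by
  have norm_sub_le : ‖f t - f a‖ ≤ 0 * ‖t - a‖ :=
    hs.norm_image_sub_le_of_norm_hasDerivWithin_le hf (fun _ _ => norm_zero.le) ha ht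
  rwa [zero_mul, norm_le_zero_iff, sub_eq_zero] at norm_sub_le

theorem eq_add_smul_of_hasDerivWithinAt_const {γ : 𝕜 → E} {v : E} (hs : Convex ℝ s)
    (hγ : ∀ τ ∈ s, HasDerivWithinAt γ v s τ) (ha : a ∈ s) (ht : t ∈ s) :
    γ t = γ a + (t - a) • v := by
  have hasDerivWithinAt_sub : ∀ τ ∈ s, HasDerivWithinAt (fun τ => γ τ - τ • v) 0 s τ := by
    intro τ hτ
    simpa only [id_eq, one_smul, sub_self] using
      (hγ τ hτ).fun_sub ((hasDerivWithinAt_id τ s).smul_const v)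
  have sub_eq : γ t - t • v = γ a - a • v :=
    eq_of_hasDerivWithinAt_zero hs hasDerivWithinAt_sub ha ht
  rw [sub_smul, sub_eq_iff_eq_add.mp sub_eq]
  abel

theorem burgers_velocity_eq {u : 𝕜 × E → E} {γ : 𝕜 → E} (hs : Convex ℝ s)
    (hu : ∀ τ ∈ s, DifferentiableAt 𝕜 u (τ, γ τ))
    (hburgers : ∀ τ ∈ s,
      deriv (fun σ => u (σ, γ τ)) τ + fderiv 𝕜 (fun x => u (τ, x)) (γ τ) (u (τ, γ τ)) = 0)
    (hγ : ∀ τ ∈ s, HasDerivWithinAt γ (u (τ, γ τ)) s τ) (ha : a ∈ s) (ht : t ∈ s) :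
    u (t, γ t) = u (a, γ a) := by
  have acceleration_zero : ∀ τ ∈ s, HasDerivWithinAt (fun τ => u (τ, γ τ)) 0 s τ :=
    fun τ hτ => hburgers τ hτ ▸ hasDerivWithinAt_comp_graph (hu τ hτ) (hγ τ hτ)
  exact eq_of_hasDerivWithinAt_zero (f := fun τ => u (τ, γ τ)) hs acceleration_zero ha ht

theorem burgers_particles_move_with_constant_velocity_general {u : 𝕜 × E → E} {γ : 𝕜 → E}
    (hs : Convex ℝ s) (hu : ∀ τ ∈ s, DifferentiableAt 𝕜 u (τ, γ τ))
    (hburgers : ∀ τ ∈ s,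
      deriv (fun σ => u (σ, γ τ)) τ + fderiv 𝕜 (fun x => u (τ, x)) (γ τ) (u (τ, γ τ)) = 0)
    (hγ : ∀ τ ∈ s, HasDerivWithinAt γ (u (τ, γ τ)) s τ) (ha : a ∈ s) (ht : t ∈ s) :
    γ t = γ a + (t - a) • u (a, γ a) := by
  have velocity_const : ∀ τ ∈ s, HasDerivWithinAt γ (u (a, γ a)) s τ :=
    fun τ hτ => burgers_velocity_eq hs hu hburgers hγ ha hτ ▸ hγ τ hτ
  exact eq_add_smul_of_hasDerivWithinAt_const hs velocity_const ha ht

end ConvexTime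

/-- flat-space content of Proposition 1: along a smooth solution of the
inviscid Burgers equation each particle moves with constant velocity along a straight line. -/
theorem burgers_particles_move_with_constant_velocity
    (n : ℕ) (T : ℝ) (hT : 0 ≤ T)
    (u : ℝ × EuclideanSpace ℝ (Fin n) → EuclideanSpace ℝ (Fin n))
    (hu : ContDiff ℝ 1 u)
    (hburgers : ∀ (t : ℝ) (x : EuclideanSpace ℝ (Fin n)),
      deriv (fun s => u (s, x)) t + (fderiv ℝ (fun y => u (t, y)) x) (u (t, x)) = 0)
    (γ : ℝ → EuclideanSpace ℝ (Fin n))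
    (hγ : ∀ t ∈ Set.Icc (0 : ℝ) T, HasDerivAt γ (u (t, γ t)) t) :
    ∀ t ∈ Set.Icc (0 : ℝ) T, γ t = γ 0 + t • u (0, γ 0) := by
  intro t ht
  simpa only [sub_zero] using
    burgers_particles_move_with_constant_velocity_general (convex_Icc 0 T)
      (fun τ _ => hu.differentiable one_ne_zero (τ, γ τ)) (fun τ _ => hburgers τ (γ τ))
      (fun τ hτ => (hγ τ hτ).hasDerivWithinAt) (Set.left_mem_Icc.mpr hT) ht
end

section
/- Let v : ℝⁿ → ℝⁿ be C¹ with ‖Dv(x)‖ ≤ λ (operator norm) for all x, where λ > 0, so that for each t ∈ [0, 1/λ) the map Φₜ(x) = x + t·v(x) is a bijection of ℝⁿ. Define u : [0, 1/λ) × ℝⁿ → ℝⁿ by u(t, y) = v(Φₜ⁻¹(y)). Then u is differentiable on (0, 1/λ) × ℝⁿ, u(0,·) = v, and u satisfies the inviscid Burgers equation ∂ₜu(t,y) + (Dₓu(t,y))(u(t,y)) = 0 for all t ∈ (0, 1/λ) and y ∈ ℝⁿ. -/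
/-!
Along each line `s ↦ (s, x + s • v x)` the field `u` has the constant value `v x`, and
differentiating this identity in `s` is exactly the Burgers equation. If `v` is `K`-Lipschitz and
`|t| * K < 1`, then `Φₜ = id + t • v` is expanding up to a constant, hence injective, and it is onto
because solving `Φₜ x = y` amounts to finding a fixed point of the contraction `x ↦ y - t • v x`.
The expansion estimate makes the space-time inverse `(t, y) ↦ (t, Φₜ⁻¹ y)` continuous, and a
continuous inverse of a map with invertible derivative is differentiable.
-/

open Function Filter Topology
open scoped NNReal

theorem exists_continuousLinearEquiv_eq_id_add {𝕜 E : Type*} [NontriviallyNormedField 𝕜]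
    [NormedAddCommGroup E] [NormedSpace 𝕜 E] [CompleteSpace E] {A : E →L[𝕜] E} (hA : ‖A‖ < 1) :
    ∃ e : E ≃L[𝕜] E, (e : E →L[𝕜] E) = .id 𝕜 E + A := by
  refine ⟨.unitsEquiv 𝕜 E (Units.oneSub (-A) (by rwa [norm_neg])), ?_⟩
  ext z
  simp

section TransportEquation

variable {E F : Type*} [NormedAddCommGroup E] [NormedSpace ℝ E]
  [NormedAddCommGroup F] [NormedSpace ℝ F]

theorem deriv_add_fderiv_eq_zero_of_eventually_const {u : ℝ × E → F} {x w : E} {c : F} {t : ℝ}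
    (hu : DifferentiableAt ℝ u (t, x + t • w)) (hconst : ∀ᶠ s in 𝓝 t, u (s, x + s • w) = c) :
    deriv (fun s => u (s, x + t • w)) t + fderiv ℝ (fun z => u (t, z)) (x + t • w) w = 0 := by
  set D := fderiv ℝ u (t, x + t • w)
  have hD : HasFDerivAt u D (t, x + t • w) := hu.hasFDerivAt
  have htime : HasDerivAt (fun s => u (s, x + t • w)) (D (1, 0)) t :=
    hD.comp_hasDerivAt (f := fun s : ℝ => (s, x + t • w)) t
      ((hasDerivAt_id t).prodMk (hasDerivAt_const t _))
  have hspace : HasFDerivAt (fun z => u (t, z)) (D ∘L .inr ℝ ℝ E) (x + t • w) :=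
    hD.comp (x + t • w) (hasFDerivAt_prodMk_right t _)
  have hline : HasDerivAt (fun s : ℝ => x + s • w) w t := by
    simpa using ((hasDerivAt_id t).smul_const w).const_add x
  have hchar : HasDerivAt (fun s => u (s, x + s • w)) (D (1, w)) t :=
    hD.comp_hasDerivAt (f := fun s : ℝ => (s, x + s • w)) t ((hasDerivAt_id t).prodMk hline)
  have hzero : HasDerivAt (fun s => u (s, x + s • w)) 0 t :=
    (hasDerivAt_const t c).congr_of_eventuallyEq hconst
  calc deriv (fun s => u (s, x + t • w)) t + fderiv ℝ (fun z => u (t, z)) (x + t • w) w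
      = D (1, 0) + D (0, w) := by rw [htime.deriv, hspace.fderiv]; rfl
    _ = D (1, w) := by simp [← map_add]
    _ = 0 := hchar.unique hzero

end TransportEquation

section Characteristics

variable {E : Type*} [NormedAddCommGroup E] [NormedSpace ℝ E]

/-- The map `Φₜ` sending a point to its position at time `t` on the straight characteristic
with velocity `v`. -/
def characteristicMap (v : E → E) (t : ℝ) (x : E) : E :=
  x + t • v x

/-- The foot `Φₜ⁻¹(y)` of the characteristic through `(t, y)`, as a function on space-time.
The value is meaningful only when `Φₜ` is bijective. -/
noncomputable def characteristicFoot (v : E → E) (p : ℝ × E) : E :=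
  invFun (characteristicMap v p.1) p.2

/-- The Burgers velocity field `u(t, y) = v(Φₜ⁻¹(y))` with initial velocity `v`. -/
noncomputable def burgersSolution (v : E → E) (p : ℝ × E) : E :=
  v (characteristicFoot v p)

variable {v : E → E} {K : ℝ≥0} {t : ℝ}

theorem antilipschitzWith_characteristicMap (hv : LipschitzWith K v) (ht : ‖t‖₊ * K < 1) :
    AntilipschitzWith (1 - ‖t‖₊ * K)⁻¹ (characteristicMap v t) := by
  have h := AntilipschitzWith.id.add_lipschitzWith ((lipschitzWith_smul t).comp hv)
    (by rwa [inv_one])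
  rwa [inv_one] at h

theorem surjective_characteristicMap [CompleteSpace E] (hv : LipschitzWith K v)
    (ht : ‖t‖₊ * K < 1) : Surjective (characteristicMap v t) := by
  intro y
  have hcontr : ContractingWith (‖t‖₊ * K) (fun x => y - t • v x) :=
    ⟨ht, by simpa using (LipschitzWith.const y).sub ((lipschitzWith_smul t).comp hv)⟩
  exact ⟨hcontr.fixedPoint, (sub_eq_iff_eq_add.1 hcontr.fixedPoint_isFixedPt).symm⟩

theorem bijective_characteristicMap [CompleteSpace E] (hv : LipschitzWith K v)
    (ht : ‖t‖₊ * K < 1) : Bijective (characteristicMap v t) :=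
  ⟨(antilipschitzWith_characteristicMap hv ht).injective, surjective_characteristicMap hv ht⟩

theorem characteristicFoot_characteristicMap (hv : LipschitzWith K v) (ht : ‖t‖₊ * K < 1) (x : E) :
    characteristicFoot v (t, characteristicMap v t x) = x :=
  leftInverse_invFun (antilipschitzWith_characteristicMap hv ht).injective x

theorem characteristicMap_characteristicFoot [CompleteSpace E] (hv : LipschitzWith K v)
    (ht : ‖t‖₊ * K < 1) (y : E) : characteristicMap v t (characteristicFoot v (t, y)) = y :=
  rightInverse_invFun (surjective_characteristicMap hv ht) y

theorem burgersSolution_characteristicMap (hv : LipschitzWith K v) (ht : ‖t‖₊ * K < 1) (x : E) :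
    burgersSolution v (t, characteristicMap v t x) = v x :=
  congrArg v (characteristicFoot_characteristicMap hv ht x)

theorem burgersSolution_zero (v : E → E) (y : E) : burgersSolution v (0, y) = v y := by
  have hid : characteristicMap v 0 = id := by ext x; simp [characteristicMap]
  have hfoot : characteristicFoot v (0, y) = y := by
    simpa [characteristicFoot, hid] using leftInverse_invFun (injective_id (α := E)) y
  rw [burgersSolution, hfoot]

theorem eventually_nnnorm_mul_lt_one (ht : ‖t‖₊ * K < 1) : ∀ᶠ s in 𝓝 t, ‖s‖₊ * K < 1 :=
  (continuous_nnnorm.mul continuous_const).continuousAt.eventually_lt_const ht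

theorem continuousAt_characteristicFoot [CompleteSpace E] (hv : LipschitzWith K v)
    (ht : ‖t‖₊ * K < 1) (x : E) :
    ContinuousAt (characteristicFoot v) (t, characteristicMap v t x) := by
  set p : ℝ × E := (t, characteristicMap v t x)
  let bound (q : ℝ × E) : ℝ :=
    ((1 - ‖q.1‖₊ * K)⁻¹ : ℝ≥0) * dist q.2 (characteristicMap v q.1 x)
  have hbound : ∀ᶠ q in 𝓝 p, dist (characteristicFoot v q) x ≤ bound q := by
    filter_upwards [continuousAt_fst.eventually (eventually_nnnorm_mul_lt_one ht)] with q hq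
    simpa only [characteristicMap_characteristicFoot hv hq] using
      (antilipschitzWith_characteristicMap hv hq).le_mul_dist (characteristicFoot v q) x
  have hcont : ContinuousAt bound p := by
    have hinv : ContinuousAt (fun q : ℝ × E => (1 - ‖q.1‖₊ * K)⁻¹) p :=
      ContinuousAt.inv₀ (by fun_prop) (tsub_pos_of_lt ht).ne'
    have hdist : ContinuousAt (fun q : ℝ × E => dist q.2 (characteristicMap v q.1 x)) p := by
      unfold characteristicMap; fun_prop
    exact (NNReal.continuous_coe.continuousAt.comp hinv).mul hdist
  have hlim : Tendsto bound (𝓝 p) (𝓝 0) := by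
    simpa [bound, p] using hcont.tendsto
  rw [ContinuousAt, characteristicFoot_characteristicMap hv ht, tendsto_iff_dist_tendsto_zero]
  exact squeeze_zero' (.of_forall fun _ => dist_nonneg) hbound hlim

theorem hasFDerivAt_prodMk_characteristicMap {v' : E →L[ℝ] E} {x : E} (hv : HasFDerivAt v v' x)
    (t : ℝ) {e : E ≃L[ℝ] E} (he : (e : E →L[ℝ] E) = .id ℝ E + t • v') :
    HasFDerivAt (fun p : ℝ × E => (p.1, characteristicMap v p.1 p.2))
      ((ContinuousLinearEquiv.refl ℝ ℝ).skewProd e (.toSpanSingleton ℝ (v x)) :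
        ℝ × E →L[ℝ] ℝ × E) (t, x) := by
  have hvsnd : HasFDerivAt (fun p : ℝ × E => v p.2) (v' ∘L .snd ℝ ℝ E) (t, x) :=
    HasFDerivAt.comp (t, x) hv hasFDerivAt_snd
  have he_apply (z : E) : e z = z + t • v' z := congr($he z)
  refine (hasFDerivAt_fst.prodMk
    (hasFDerivAt_snd.add (hasFDerivAt_fst.smul hvsnd))).congr_fderiv ?_
  ext <;> simp [he_apply]

theorem differentiableAt_characteristicFoot [CompleteSpace E] (hv : LipschitzWith K v)
    (ht : ‖t‖₊ * K < 1) {x : E} (hvx : DifferentiableAt ℝ v x) :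
    DifferentiableAt ℝ (characteristicFoot v) (t, characteristicMap v t x) := by
  have hsmall : ‖t • fderiv ℝ v x‖ < 1 :=
    calc ‖t • fderiv ℝ v x‖ = ‖t‖ * ‖fderiv ℝ v x‖ := norm_smul _ _
      _ ≤ ‖t‖ * K := by gcongr; exact norm_fderiv_le_of_lipschitz ℝ hv
      _ < 1 := ht
  obtain ⟨e, he⟩ := exists_continuousLinearEquiv_eq_id_add hsmall
  have hinverse : ∀ᶠ q in 𝓝 (t, characteristicMap v t x),
      (q.1, characteristicMap v q.1 (characteristicFoot v q)) = q := by
    filter_upwards [continuousAt_fst.eventually (eventually_nnnorm_mul_lt_one ht)] with q hq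
    exact Prod.ext rfl (characteristicMap_characteristicFoot hv hq q.2)
  have hderiv := hasFDerivAt_prodMk_characteristicMap hvx.hasFDerivAt t he
  rw [← characteristicFoot_characteristicMap hv ht x] at hderiv
  exact (HasFDerivAt.of_local_left_inverse (g := fun q => (q.1, characteristicFoot v q))
    (continuousAt_fst.prodMk (continuousAt_characteristicFoot hv ht x)) hderiv
    hinverse).differentiableAt.snd

theorem differentiableAt_burgersSolution [CompleteSpace E] (hv : LipschitzWith K v)
    (ht : ‖t‖₊ * K < 1) {x : E} (hvx : DifferentiableAt ℝ v x) :
    DifferentiableAt ℝ (burgersSolution v) (t, characteristicMap v t x) := by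
  refine DifferentiableAt.comp _ ?_ (differentiableAt_characteristicFoot hv ht hvx)
  rwa [characteristicFoot_characteristicMap hv ht]

theorem burgersSolution_burgers_equation [CompleteSpace E] (hv : LipschitzWith K v)
    (ht : ‖t‖₊ * K < 1) {x : E} (hvx : DifferentiableAt ℝ v x) :
    deriv (fun s => burgersSolution v (s, characteristicMap v t x)) t +
      fderiv ℝ (fun z => burgersSolution v (t, z)) (characteristicMap v t x)
        (burgersSolution v (t, characteristicMap v t x)) = 0 := by
  rw [burgersSolution_characteristicMap hv ht]
  refine deriv_add_fderiv_eq_zero_of_eventually_const (c := v x)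
    (differentiableAt_burgersSolution hv ht hvx) ?_
  filter_upwards [eventually_nnnorm_mul_lt_one ht] with s hs
  exact burgersSolution_characteristicMap hv hs x

theorem burgers_solution_via_characteristics_general [CompleteSpace E]
    (hv : Differentiable ℝ v) (hK : LipschitzWith K v) :
    (∀ t : ℝ, ‖t‖₊ * K < 1 → Bijective (characteristicMap v t)) ∧
    (∀ y, burgersSolution v (0, y) = v y) ∧
    (∀ t : ℝ, ‖t‖₊ * K < 1 → ∀ y, DifferentiableAt ℝ (burgersSolution v) (t, y)) ∧
    (∀ t : ℝ, ‖t‖₊ * K < 1 → ∀ y, deriv (fun s => burgersSolution v (s, y)) t +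
      fderiv ℝ (fun z => burgersSolution v (t, z)) y (burgersSolution v (t, y)) = 0) := by
  refine ⟨fun t ht => bijective_characteristicMap hK ht, burgersSolution_zero v,
    fun t ht => ?_, fun t ht => ?_⟩
  · exact (surjective_characteristicMap hK ht).forall.2 fun x =>
      differentiableAt_burgersSolution hK ht (hv x)
  · exact (surjective_characteristicMap hK ht).forall.2 fun x =>
      burgersSolution_burgers_equation hK ht (hv x)

end Characteristics

theorem nnnorm_mul_lt_one_of_mem_Ico {K : ℝ≥0} (hK : 0 < K) {t : ℝ}
    (ht : t ∈ Set.Ico (0 : ℝ) (1 / K)) : ‖t‖₊ * K < 1 := by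
  rw [← NNReal.coe_lt_coe]
  simpa [abs_of_nonneg ht.1] using (lt_div_iff₀ (NNReal.coe_pos.2 hK)).1 ht.2

/-- the explicit smooth Burgers solution before shock formation, obtained by
transporting the initial velocity `v` along straight characteristics: `u(t,y) = v(Φₜ⁻¹(y))`
is differentiable on `(0,1/λ) × ℝⁿ`, satisfies `u(0,·) = v`, and solves the inviscid
Burgers equation there. -/
theorem burgers_solution_via_characteristics
    (n : ℕ) (v : EuclideanSpace ℝ (Fin n) → EuclideanSpace ℝ (Fin n))
    (hv : ContDiff ℝ 1 v)
    (lam : ℝ) (hlam : 0 < lam)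
    (hbound : ∀ x : EuclideanSpace ℝ (Fin n), ‖fderiv ℝ v x‖ ≤ lam)
    (u : ℝ × EuclideanSpace ℝ (Fin n) → EuclideanSpace ℝ (Fin n))
    (hu : u = fun p =>
      v (Function.invFun (fun x : EuclideanSpace ℝ (Fin n) => x + p.1 • v x) p.2)) :
    (∀ t ∈ Set.Ico (0 : ℝ) (1 / lam),
      Function.Bijective (fun x : EuclideanSpace ℝ (Fin n) => x + t • v x)) ∧
    (∀ y : EuclideanSpace ℝ (Fin n), u (0, y) = v y) ∧
    (∀ t ∈ Set.Ioo (0 : ℝ) (1 / lam), ∀ y : EuclideanSpace ℝ (Fin n),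
      DifferentiableAt ℝ u (t, y)) ∧
    (∀ t ∈ Set.Ioo (0 : ℝ) (1 / lam), ∀ y : EuclideanSpace ℝ (Fin n),
      deriv (fun s => u (s, y)) t + (fderiv ℝ (fun z => u (t, z)) y) (u (t, y)) = 0) := by
  obtain rfl : u = burgersSolution v := hu
  lift lam to ℝ≥0 using hlam.le
  obtain ⟨hbij, hinit, hdiff, hburgers⟩ := burgers_solution_via_characteristics_general
    (hv.differentiable one_ne_zero)
    (lipschitzWith_of_nnnorm_fderiv_le (hv.differentiable one_ne_zero) hbound)
  have hsmall {t : ℝ} := nnnorm_mul_lt_one_of_mem_Ico (t := t) hlam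
  exact ⟨fun t ht => hbij t (hsmall ht), hinit,
    fun t ht => hdiff t (hsmall (Set.Ioo_subset_Ico_self ht)),
    fun t ht => hburgers t (hsmall (Set.Ioo_subset_Ico_self ht))⟩
end

section
/- Let φ : ℝⁿ → ℝ be C², let t₀ > 0, and suppose the Hessian satisfies D²φ(x)(w,w) ≥ −‖w‖²/t₀ for all x, w ∈ ℝⁿ. Then for every t with 0 ≤ t < t₀ and all x, y ∈ ℝⁿ one has ⟨(x + t·∇φ(x)) − (y + t·∇φ(y)), x − y⟩ ≥ (1 − t/t₀)·‖x − y‖²; in particular the map Φₜ(x) = x + t·∇φ(x) is injective for all 0 ≤ t < t₀. -/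
/-!
By the mean value theorem on the segment from `y` to `x`, the Hessian bound `D²φ ≥ -1/t₀` gives
`⟪∇φ x - ∇φ y, x - y⟫ ≥ -‖x - y‖² / t₀`. The identity contributes `‖x - y‖²`, so `x ↦ x + t ∇φ x`
is strongly monotone with constant `1 - t / t₀ > 0`, and a strongly monotone map is injective.
-/

section VectorField

variable {E : Type*} [NormedAddCommGroup E] [InnerProductSpace ℝ E] {s : Set E} {m t : ℝ}
  {v : E → E}

/-- The vector field `v` satisfies `m ‖x - y‖² ≤ ⟪v x - v y, x - y⟫` on `s`. The modulus `m` may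
have either sign: strong monotonicity is the case `0 < m`, and a negative `m` bounds how far `v`
is from being monotone. -/
def MonotoneWithModulusOn (s : Set E) (m : ℝ) (v : E → E) : Prop :=
  ∀ ⦃x⦄, x ∈ s → ∀ ⦃y⦄, y ∈ s → m * ‖x - y‖ ^ 2 ≤ inner ℝ (v x - v y) (x - y)

namespace MonotoneWithModulusOn

theorem injOn (hv : MonotoneWithModulusOn s m v) (hm : 0 < m) : Set.InjOn v s := by
  intro x hx y hy hxy
  have hle : m * ‖x - y‖ ^ 2 ≤ 0 := by
    simpa only [hxy, sub_self, inner_zero_left] using hv hx hy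
  have hsq : ‖x - y‖ ^ 2 = 0 := le_antisymm (nonpos_of_mul_nonpos_right hle hm) (sq_nonneg _)
  exact sub_eq_zero.mp (norm_eq_zero.mp (sq_eq_zero_iff.mp hsq))

theorem id_add_smul (hv : MonotoneWithModulusOn s m v) (ht : 0 ≤ t) :
    MonotoneWithModulusOn s (1 + t * m) fun x => x + t • v x := by
  intro x hx y hy
  calc (1 + t * m) * ‖x - y‖ ^ 2
      = ‖x - y‖ ^ 2 + t * (m * ‖x - y‖ ^ 2) := by ring
    _ ≤ ‖x - y‖ ^ 2 + t * inner ℝ (v x - v y) (x - y) := by gcongr; exact hv hx hy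
    _ = inner ℝ ((x - y) + t • (v x - v y)) (x - y) := by
        rw [inner_add_left, real_inner_smul_left, real_inner_self_eq_norm_sq]
    _ = inner ℝ ((x + t • v x) - (y + t • v y)) (x - y) := by
        rw [smul_sub, add_sub_add_comm]

theorem of_hasFDerivWithinAt {v' : E → E →L[ℝ] E} (hs : Convex ℝ s)
    (hv : ∀ x ∈ s, HasFDerivWithinAt v (v' x) s x)
    (hm : ∀ x ∈ s, ∀ w, m * ‖w‖ ^ 2 ≤ inner ℝ (v' x w) w) :
    MonotoneWithModulusOn s m v := by
  intro x hx y hy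
  have hderiv : ∀ z ∈ s, HasFDerivWithinAt (fun z => inner ℝ (x - y) (v z))
      ((innerSL ℝ (x - y)).comp (v' z)) s z := fun z hz =>
    (innerSL ℝ (x - y)).hasFDerivAt.comp_hasFDerivWithinAt z (hv z hz)
  obtain ⟨z, hz, hmvt⟩ := domain_mvt hderiv hs hy hx
  calc m * ‖x - y‖ ^ 2
      ≤ inner ℝ (v' z (x - y)) (x - y) := hm z (hs.segment_subset hy hx hz) _
    _ = inner ℝ (x - y) (v x) - inner ℝ (x - y) (v y) := by
        rw [hmvt, real_inner_comm]; rfl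
    _ = inner ℝ (v x - v y) (x - y) := by rw [← inner_sub_right, real_inner_comm]

end MonotoneWithModulusOn

end VectorField

section Gradient

variable {E : Type*} [NormedAddCommGroup E] [InnerProductSpace ℝ E] [CompleteSpace E]
  {φ : E → ℝ} {s : Set E} {m : ℝ} {x : E}

theorem differentiableAt_gradient_of_contDiffAt_two (hφ : ContDiffAt ℝ 2 φ x) :
    DifferentiableAt ℝ (gradient φ) x :=
  (InnerProductSpace.toDual ℝ E).symm.differentiableAt.comp x
    ((hφ.fderiv_right (m := 1) (by norm_num)).differentiableAt one_ne_zero)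

theorem inner_fderiv_gradient_apply (φ : E → ℝ) (x u w : E) :
    inner ℝ (fderiv ℝ (gradient φ) x u) w = iteratedFDeriv ℝ 2 φ x ![u, w] := by
  have hgrad : fderiv ℝ (gradient φ) x u =
      (InnerProductSpace.toDual ℝ E).symm (fderiv ℝ (fderiv ℝ φ) x u) :=
    congrArg (· u) ((InnerProductSpace.toDual ℝ E).symm.comp_fderiv (f := fderiv ℝ φ) (x := x))
  rw [hgrad, InnerProductSpace.toDual_symm_apply, iteratedFDeriv_two_apply]
  rfl

theorem monotoneWithModulusOn_gradient_of_hessian_ge (hs : Convex ℝ s)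
    (hφ : ∀ x ∈ s, ContDiffAt ℝ 2 φ x)
    (hm : ∀ x ∈ s, ∀ w, m * ‖w‖ ^ 2 ≤ iteratedFDeriv ℝ 2 φ x ![w, w]) :
    MonotoneWithModulusOn s m (gradient φ) :=
  .of_hasFDerivWithinAt hs
    (fun x hx =>
      (differentiableAt_gradient_of_contDiffAt_two (hφ x hx)).hasFDerivAt.hasFDerivWithinAt)
    fun x hx w => (hm x hx w).trans_eq (inner_fderiv_gradient_apply φ x w w).symm

theorem injectivity_before_shock_time_general (hs : Convex ℝ s)
    (hφ : ∀ x ∈ s, ContDiffAt ℝ 2 φ x) {t₀ : ℝ}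
    (hhess : ∀ x ∈ s, ∀ w, -(‖w‖ ^ 2 / t₀) ≤ iteratedFDeriv ℝ 2 φ x ![w, w])
    {t : ℝ} (ht : 0 ≤ t) (htt₀ : t < t₀) :
    (∀ x ∈ s, ∀ y ∈ s, (1 - t / t₀) * ‖x - y‖ ^ 2 ≤
        inner ℝ ((x + t • gradient φ x) - (y + t • gradient φ y)) (x - y)) ∧
      Set.InjOn (fun x => x + t • gradient φ x) s := by
  have hgrad : MonotoneWithModulusOn s (-t₀⁻¹) (gradient φ) :=
    monotoneWithModulusOn_gradient_of_hessian_ge hs hφ fun x hx w =>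
      (by ring : -t₀⁻¹ * ‖w‖ ^ 2 = -(‖w‖ ^ 2 / t₀)).trans_le (hhess x hx w)
  have hflow : MonotoneWithModulusOn s (1 - t / t₀) fun x => x + t • gradient φ x := by
    convert hgrad.id_add_smul ht using 1
    ring
  have hpos : 0 < 1 - t / t₀ := sub_pos.mpr ((div_lt_one (ht.trans_lt htt₀)).mpr htt₀)
  exact ⟨fun x hx y hy => hflow hx hy, hflow.injOn hpos⟩

end Gradient

/-- quantitative flat-space mechanism behind Theorems 2 and 4: if the Hessian
of `φ` is bounded below by `-1/t₀` then for `0 ≤ t < t₀` the map `Φₜ(x) = x + t·∇φ(x)`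
satisfies a strong monotonicity inequality, and in particular is injective. -/
theorem injectivity_before_shock_time
    (n : ℕ) (φ : EuclideanSpace ℝ (Fin n) → ℝ)
    (hφ : ContDiff ℝ 2 φ)
    (t₀ : ℝ) (ht₀ : 0 < t₀)
    (hhess : ∀ x w : EuclideanSpace ℝ (Fin n),
      -(‖w‖ ^ 2 / t₀) ≤ iteratedFDeriv ℝ 2 φ x ![w, w]) :
    ∀ t : ℝ, 0 ≤ t → t < t₀ →
      (∀ x y : EuclideanSpace ℝ (Fin n),
        (1 - t / t₀) * ‖x - y‖ ^ 2 ≤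
          (inner ℝ ((x + t • gradient φ x) - (y + t • gradient φ y)) (x - y) : ℝ)) ∧
      Function.Injective
        (fun x : EuclideanSpace ℝ (Fin n) => x + t • gradient φ x) := by
  intro t ht htt₀
  simpa using injectivity_before_shock_time_general convex_univ (fun x _ => hφ.contDiffAt)
    (fun x _ => hhess x) ht htt₀
end

section
/- Let X : ℝ² → ℝ² be a differentiable vector field with tr(DX(x)) = 0 for all x (i.e., X is divergence-free). Suppose x₀ ∈ ℝ² is a critical point of the function x ↦ ‖X(x)‖² (its Fréchet derivative vanishes at x₀, e.g., x₀ is a local maximum) and X(x₀) ≠ 0. Then det(DX(x₀)) = 0, and consequently (DX(x₀)) ∘ (DX(x₀)) = 0; in particular tr((DX(x₀))²) = 0. -/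
/-!
At a critical point of `‖X‖²` the range of `DX` is orthogonal to `X`, so `DX` is not surjective
where `X ≠ 0` and its determinant vanishes. In dimension two the Cayley–Hamilton identity
`A² - tr(A) A + det(A) = 0` then gives `(DX)² = 0` when `X` is divergence-free.
-/

open Module

section CayleyHamilton

open Polynomial

variable {R M : Type*} [CommRing R] [Nontrivial R] [AddCommGroup M] [Module R M] [Module.Free R M]

theorem charpoly_eq_of_finrank_eq_two [Module.Finite R M] (hM : finrank R M = 2)
    (f : M →ₗ[R] M) :
    f.charpoly = X ^ 2 - C (LinearMap.trace R M f) * X + C (LinearMap.det f) := by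
  let b := finBasisOfFinrankEq R M hM
  rw [← f.charpoly_toMatrix b, Matrix.charpoly_fin_two, LinearMap.det_toMatrix,
    ← LinearMap.trace_eq_matrix_trace]

theorem sq_eq_zero_of_trace_eq_zero_of_det_eq_zero (hM : finrank R M = 2) {f : M →ₗ[R] M}
    (htrace : LinearMap.trace R M f = 0) (hdet : LinearMap.det f = 0) : f ^ 2 = 0 := by
  have : Module.Finite R M := finite_of_finrank_eq_succ hM
  have cayley_hamilton := f.aeval_self_charpoly
  simpa [charpoly_eq_of_finrank_eq_two hM, htrace, hdet] using cayley_hamilton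

end CayleyHamilton

theorem det_eq_zero_of_forall_inner_eq_zero {𝕜 E : Type*} [RCLike 𝕜] [NormedAddCommGroup E]
    [InnerProductSpace 𝕜 E] [FiniteDimensional 𝕜 E] {f : E →ₗ[𝕜] E} {w : E} (hw : w ≠ 0)
    (hf : ∀ v, inner 𝕜 w (f v) = 0) : LinearMap.det f = 0 := by
  by_contra hdet
  obtain ⟨v, rfl⟩ := (f.equivOfDetNeZero hdet).surjective w
  exact hw (inner_self_eq_zero.mp (hf v))

theorem inner_fderiv_eq_zero_of_fderiv_norm_sq_eq_zero {E F : Type*} [NormedAddCommGroup E]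
    [NormedSpace ℝ E] [NormedAddCommGroup F] [InnerProductSpace ℝ F] {X : E → F} {x : E}
    (hX : DifferentiableAt ℝ X x) (hcrit : fderiv ℝ (fun y => ‖X y‖ ^ 2) x = 0) (v : E) :
    inner ℝ (X x) (fderiv ℝ X x v) = 0 := by
  have hderiv := hX.hasFDerivAt.norm_sq.fderiv
  simpa using (DFunLike.congr_fun (hcrit.symm.trans hderiv) v).symm

theorem divergence_free_critical_point_degenerate_general {E : Type*} [NormedAddCommGroup E]
    [InnerProductSpace ℝ E] (hE : finrank ℝ E = 2) {X : E → E} {x₀ : E}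
    (hX : DifferentiableAt ℝ X x₀)
    (hdiv : LinearMap.trace ℝ E (fderiv ℝ X x₀ : E →ₗ[ℝ] E) = 0)
    (hcrit : fderiv ℝ (fun x => ‖X x‖ ^ 2) x₀ = 0) (hX0 : X x₀ ≠ 0) :
    LinearMap.det (fderiv ℝ X x₀ : E →ₗ[ℝ] E) = 0 ∧
    (fderiv ℝ X x₀).comp (fderiv ℝ X x₀) = 0 ∧
    LinearMap.trace ℝ E ((fderiv ℝ X x₀).comp (fderiv ℝ X x₀) : E →ₗ[ℝ] E) = 0 := by
  have : FiniteDimensional ℝ E := finite_of_finrank_eq_succ hE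
  have hdet : LinearMap.det (fderiv ℝ X x₀ : E →ₗ[ℝ] E) = 0 :=
    det_eq_zero_of_forall_inner_eq_zero hX0
      (inner_fderiv_eq_zero_of_fderiv_norm_sq_eq_zero hX hcrit)
  have hsq : (fderiv ℝ X x₀ : E →ₗ[ℝ] E) ^ 2 = 0 :=
    sq_eq_zero_of_trace_eq_zero_of_det_eq_zero hE hdiv hdet
  have hcomp : (fderiv ℝ X x₀).comp (fderiv ℝ X x₀) = 0 := by
    ext1 v
    exact LinearMap.congr_fun hsq v
  exact ⟨hdet, hcomp, by simp [hcomp]⟩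

/-- the key pointwise lemma in the proof of the non-existence of asymptotic
directions (last section of the paper): for a divergence-free field `X` on ℝ², at a
critical point of `‖X‖²` where `X` does not vanish, the Jacobi matrix `DX` is degenerate,
and consequently `(DX)² = 0`, in particular `tr((DX)²) = 0`. -/
theorem divergence_free_critical_point_degenerate
    (X : EuclideanSpace ℝ (Fin 2) → EuclideanSpace ℝ (Fin 2))
    (hX : Differentiable ℝ X)
    (hdiv : ∀ x, LinearMap.trace ℝ (EuclideanSpace ℝ (Fin 2))
      (fderiv ℝ X x : EuclideanSpace ℝ (Fin 2) →ₗ[ℝ] EuclideanSpace ℝ (Fin 2)) = 0)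
    (x₀ : EuclideanSpace ℝ (Fin 2))
    (hcrit : fderiv ℝ (fun x => ‖X x‖ ^ 2) x₀ = 0)
    (hX0 : X x₀ ≠ 0) :
    LinearMap.det
      (fderiv ℝ X x₀ : EuclideanSpace ℝ (Fin 2) →ₗ[ℝ] EuclideanSpace ℝ (Fin 2)) = 0 ∧
    (fderiv ℝ X x₀).comp (fderiv ℝ X x₀) = 0 ∧
    LinearMap.trace ℝ (EuclideanSpace ℝ (Fin 2))
      (((fderiv ℝ X x₀).comp (fderiv ℝ X x₀)) :
        EuclideanSpace ℝ (Fin 2) →ₗ[ℝ] EuclideanSpace ℝ (Fin 2)) = 0 := by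
  exact divergence_free_critical_point_degenerate_general finrank_euclideanSpace_fin (hX x₀)
    (hdiv x₀) hcrit hX0
end
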